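/- arXiv:math/0111114 — 2 statements merged into one kernel-verified Lean document; each statement's English description precedes it below -/
import Mathlib

section
/- Let E ∈ GL(m,k) and F ∈ GL(n,k). There exists an algebra isomorphism φ from B(F,E) onto the opposite algebra B(E,F)^op determined on the generators y = (y_{ij}) of B(F,E) by φ(y) = F⁻¹·ᵀz·E entrywise, i.e. φ(y_{ij}) = (F⁻¹·ᵀz·E)_{ij}, where z = (z_{ij}) is the matrix of generators of B(E,F). -/
open scoped TensorProduct
open Matrix

noncomputable section

variable (k : Type) [Field k]

/-- The matrix of free generators of the free algebra on `Fin m × Fin n`. -/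
def gens (m n : ℕ) : Matrix (Fin m) (Fin n) (FreeAlgebra k (Fin m × Fin n)) :=
  Matrix.of fun i j => FreeAlgebra.ι k (i, j)

/-- A scalar matrix viewed as a matrix over a `k`-algebra. -/
def liftMat {A : Type} [Semiring A] [Algebra k A] {p q : ℕ}
    (M : Matrix (Fin p) (Fin q) k) : Matrix (Fin p) (Fin q) A :=
  M.map (algebraMap k A)

/-- The defining relations of the algebra `B(E,F)`:
`F⁻¹ * ᵀz * E * z = 1` and `z * F⁻¹ * ᵀz * E = 1`. -/
inductive BRel {m n : ℕ} (E : Matrix (Fin m) (Fin m) k) (F : Matrix (Fin n) (Fin n) k) :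
    FreeAlgebra k (Fin m × Fin n) → FreeAlgebra k (Fin m × Fin n) → Prop
  | left (i j : Fin n) : BRel E F
      ((liftMat k (A := FreeAlgebra k (Fin m × Fin n)) F⁻¹ * (gens k m n)ᵀ * liftMat k (A := FreeAlgebra k (Fin m × Fin n)) E * gens k m n :
          Matrix (Fin n) (Fin n) (FreeAlgebra k (Fin m × Fin n))) i j)
      ((1 : Matrix (Fin n) (Fin n) (FreeAlgebra k (Fin m × Fin n))) i j)
  | right (i j : Fin m) : BRel E F
      ((gens k m n * liftMat k (A := FreeAlgebra k (Fin m × Fin n)) F⁻¹ * (gens k m n)ᵀ * liftMat k (A := FreeAlgebra k (Fin m × Fin n)) E :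
          Matrix (Fin m) (Fin m) (FreeAlgebra k (Fin m × Fin n))) i j)
      ((1 : Matrix (Fin m) (Fin m) (FreeAlgebra k (Fin m × Fin n))) i j)

/-- The algebra `B(E,F)`.  The Hopf algebra `B(E)` is `BB k E E`. -/
abbrev BB {m n : ℕ} (E : Matrix (Fin m) (Fin m) k) (F : Matrix (Fin n) (Fin n) k) :=
  RingQuot (BRel k E F)

/-- The matrix of generators of `B(E,F)`. -/
def ZMat {m n : ℕ} (E : Matrix (Fin m) (Fin m) k) (F : Matrix (Fin n) (Fin n) k) :
    Matrix (Fin m) (Fin n) (BB k E F) :=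
  Matrix.of fun i j => RingQuot.mkAlgHom k (BRel k E F) (gens k m n i j)

/-!
Read `E` and `F` as bilinear forms. The relations of `B(E,F)` say that the adjoint
`z* = F⁻¹ · ᵀz · E` of `z` is its two-sided inverse, so `B(E,F)` is the universal algebra carrying
an invertible isometry between the two forms. The isomorphism is a composite
`B(F,E) ≃ B(ᵀF,ᵀE)ᵒᵖ ≃ B(E,F)ᵒᵖ`, where `x` denotes the generators of `B(ᵀF,ᵀE)`:

* passing to the opposite algebra reverses products, which has the same effect on the relations as
  transposing `E` and `F`, so the first map is `y ↦ x` on generators;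
* the adjoint of `z*` with respect to the transposed forms is `z` again, so `z*` is an isometry for
  these forms, and the second map is `x ↦ z*`.
-/

lemma map_op_mul_map_op {R l m n : Type*} [NonUnitalNonAssocSemiring R] [Fintype m]
    (M : Matrix l m R) (N : Matrix m n R) :
    M.map MulOpposite.op * N.map MulOpposite.op = (Nᵀ * Mᵀ)ᵀ.map MulOpposite.op := by
  ext i j
  simp [Matrix.mul_apply]

section

variable {k}
variable {A C : Type} [Semiring A] [Algebra k A] [Semiring C] [Algebra k C] {m n p : ℕ}

lemma liftMat_map (f : A →ₐ[k] C) (M : Matrix (Fin m) (Fin n) k) :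
    (liftMat k (A := A) M).map f = liftMat k M := by
  ext i j
  simp [liftMat]

lemma liftMat_map_op (M : Matrix (Fin m) (Fin n) k) :
    (liftMat k (A := A) M).map MulOpposite.op = liftMat k M :=
  rfl

lemma liftMat_transpose (M : Matrix (Fin m) (Fin n) k) :
    (liftMat k (A := A) M)ᵀ = liftMat k Mᵀ :=
  rfl

lemma transpose_liftMat_mul (M : Matrix (Fin m) (Fin n) k) (W : Matrix (Fin n) (Fin p) A) :
    (liftMat k (A := A) M * W)ᵀ = Wᵀ * liftMat k (A := A) Mᵀ := by
  ext i j
  simp [Matrix.mul_apply, liftMat, Algebra.commutes]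

lemma transpose_mul_liftMat (W : Matrix (Fin m) (Fin n) A) (M : Matrix (Fin n) (Fin p) k) :
    (W * liftMat k (A := A) M)ᵀ = liftMat k (A := A) Mᵀ * Wᵀ := by
  ext i j
  simp [Matrix.mul_apply, liftMat, Algebra.commutes]

lemma liftMat_mul_liftMat_eq_one {M N : Matrix (Fin n) (Fin n) k} (h : M * N = 1) :
    liftMat k (A := A) M * liftMat k (A := A) N = 1 := by
  rw [liftMat, liftMat, ← Matrix.map_mul, h, Matrix.map_one _ (map_zero _) (map_one _)]

lemma isUnit_liftMat {M : Matrix (Fin n) (Fin n) k} (hM : IsUnit M) :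
    IsUnit (liftMat k (A := A) M) :=
  hM.map (algebraMap k A).mapMatrix

variable {E : Matrix (Fin m) (Fin m) k} {F : Matrix (Fin n) (Fin n) k}
  {W : Matrix (Fin m) (Fin n) A}

variable (E F) in
/-- The adjoint `F⁻¹ · ᵀW · E` of `W` with respect to the bilinear forms with matrices `F` on the
source and `E` on the target. -/
def formAdjoint (W : Matrix (Fin m) (Fin n) A) : Matrix (Fin n) (Fin m) A :=
  liftMat k (A := A) F⁻¹ * Wᵀ * liftMat k (A := A) E

lemma formAdjoint_map (f : A →ₐ[k] C) (W : Matrix (Fin m) (Fin n) A) :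
    (formAdjoint E F W).map f = formAdjoint E F (W.map f) := by
  simp only [formAdjoint, Matrix.map_mul, liftMat_map, Matrix.transpose_map]

lemma transpose_formAdjoint (W : Matrix (Fin m) (Fin n) A) :
    (formAdjoint E F W)ᵀ = liftMat k (A := A) Eᵀ * W * liftMat k (A := A) Fᵀ⁻¹ := by
  rw [formAdjoint, transpose_mul_liftMat, transpose_liftMat_mul, Matrix.transpose_transpose,
    Matrix.transpose_nonsing_inv, Matrix.mul_assoc]

lemma formAdjoint_map_op (W : Matrix (Fin m) (Fin n) A) :
    formAdjoint E F (W.map MulOpposite.op) = (formAdjoint E F W).map MulOpposite.op := by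
  rw [formAdjoint, formAdjoint, ← liftMat_map_op, ← liftMat_map_op, ← Matrix.transpose_map,
    map_op_mul_map_op, map_op_mul_map_op]
  simp only [liftMat_transpose, Matrix.transpose_transpose, transpose_mul_liftMat,
    transpose_liftMat_mul, Matrix.mul_assoc]

lemma formAdjoint_formAdjoint (hE : IsUnit E) (hF : IsUnit F) (W : Matrix (Fin m) (Fin n) A) :
    formAdjoint Fᵀ Eᵀ (formAdjoint E F W) = W := by
  rw [← Matrix.isUnit_transpose, Matrix.isUnit_iff_isUnit_det] at hE hF
  calc formAdjoint Fᵀ Eᵀ (formAdjoint E F W)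
    _ = (liftMat k (A := A) Eᵀ⁻¹ * liftMat k (A := A) Eᵀ) * W *
          (liftMat k (A := A) Fᵀ⁻¹ * liftMat k (A := A) Fᵀ) := by
      rw [formAdjoint, transpose_formAdjoint]
      simp only [Matrix.mul_assoc]
    _ = W := by
      rw [liftMat_mul_liftMat_eq_one (Matrix.nonsing_inv_mul _ hE),
        liftMat_mul_liftMat_eq_one (Matrix.nonsing_inv_mul _ hF), Matrix.one_mul, Matrix.mul_one]

variable (E F) in
/-- `W` is an invertible isometry from the form `F` to the form `E`: its adjoint is its two-sided
inverse. These are the defining relations of `B(E,F)`, with `W` in place of `z`. -/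
structure IsFormIsometry (W : Matrix (Fin m) (Fin n) A) : Prop where
  adjoint_mul : formAdjoint E F W * W = 1
  mul_adjoint : W * formAdjoint E F W = 1

lemma IsFormIsometry.adjoint (hW : IsFormIsometry E F W) (hE : IsUnit E) (hF : IsUnit F) :
    IsFormIsometry Fᵀ Eᵀ (formAdjoint E F W) where
  adjoint_mul := by rw [formAdjoint_formAdjoint hE hF, hW.mul_adjoint]
  mul_adjoint := by rw [formAdjoint_formAdjoint hE hF, hW.adjoint_mul]

lemma IsFormIsometry.map_op (hW : IsFormIsometry E F W) (hE : IsUnit E) (hF : IsUnit F) :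
    IsFormIsometry Eᵀ Fᵀ (W.map MulOpposite.op) where
  adjoint_mul := by
    have hF' : IsUnit (liftMat k (A := A) F⁻¹) :=
      isUnit_liftMat (Matrix.isUnit_nonsing_inv_iff.2 hF)
    have rotated : Wᵀ * liftMat k (A := A) E * W * liftMat k (A := A) F⁻¹ = 1 := by
      apply hF'.isRegular.left.mul_eq_one_symm
      simpa only [formAdjoint, Matrix.mul_assoc] using hW.adjoint_mul
    rw [formAdjoint_map_op, map_op_mul_map_op, transpose_formAdjoint, Matrix.transpose_transpose,
      Matrix.transpose_transpose, ← Matrix.mul_assoc, ← Matrix.mul_assoc, rotated,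
      Matrix.transpose_one, Matrix.map_one _ MulOpposite.op_zero MulOpposite.op_one]
  mul_adjoint := by
    have rotated : liftMat k (A := A) E * (W * liftMat k (A := A) F⁻¹ * Wᵀ) = 1 := by
      apply (isUnit_liftMat hE).isRegular.right.mul_eq_one_symm
      simpa only [formAdjoint, Matrix.mul_assoc] using hW.mul_adjoint
    rw [formAdjoint_map_op, map_op_mul_map_op, transpose_formAdjoint, Matrix.transpose_transpose,
      Matrix.transpose_transpose, Matrix.mul_assoc, Matrix.mul_assoc, ← Matrix.mul_assoc W, rotated,
      Matrix.transpose_one, Matrix.map_one _ MulOpposite.op_zero MulOpposite.op_one]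

lemma respects_BRel_iff_isFormIsometry (g : FreeAlgebra k (Fin m × Fin n) →ₐ[k] A) :
    (∀ ⦃x y⦄, BRel k E F x y → g x = g y) ↔ IsFormIsometry E F ((gens k m n).map g) := by
  have map_g_one : ∀ p, (1 : Matrix (Fin p) (Fin p) (FreeAlgebra k (Fin m × Fin n))).map g = 1 :=
    fun p => Matrix.map_one g (map_zero g) (map_one g)
  constructor
  · intro hg
    constructor
    · rw [← formAdjoint_map, ← Matrix.map_mul, ← map_g_one]
      ext i j
      exact hg (.left i j)
    · rw [← formAdjoint_map, ← Matrix.map_mul, ← map_g_one]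
      ext i j
      simp only [formAdjoint, ← Matrix.mul_assoc]
      exact hg (.right i j)
  · rintro ⟨adjoint_mul, mul_adjoint⟩ x y (⟨i, j⟩ | ⟨i, j⟩)
    · rw [← formAdjoint_map, ← Matrix.map_mul, ← map_g_one] at adjoint_mul
      exact congr_fun₂ adjoint_mul i j
    · rw [← formAdjoint_map, ← Matrix.map_mul, ← map_g_one] at mul_adjoint
      simp only [formAdjoint, ← Matrix.mul_assoc] at mul_adjoint
      exact congr_fun₂ mul_adjoint i j

namespace BB

variable (E F) in
lemma isFormIsometry_ZMat : IsFormIsometry E F (ZMat k E F) :=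
  (respects_BRel_iff_isFormIsometry _).1 fun _ _ => RingQuot.mkAlgHom_rel k

/-- The homomorphism out of `B(E,F)` given by the universal property: it sends `z` to `W`. -/
def lift (W : Matrix (Fin m) (Fin n) A) (hW : IsFormIsometry E F W) : BB k E F →ₐ[k] A :=
  RingQuot.liftAlgHom k ⟨FreeAlgebra.lift k fun ij => W ij.1 ij.2,
    (respects_BRel_iff_isFormIsometry _).2 <| by
      convert hW
      ext i j
      simp [gens]⟩

lemma lift_ZMat (hW : IsFormIsometry E F W) (i : Fin m) (j : Fin n) :
    lift W hW (ZMat k E F i j) = W i j := by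
  simp [lift, ZMat, gens]

lemma map_lift_ZMat (hW : IsFormIsometry E F W) : (ZMat k E F).map (lift W hW) = W :=
  Matrix.ext (lift_ZMat hW)

lemma hom_ext {f g : BB k E F →ₐ[k] A} (h : (ZMat k E F).map f = (ZMat k E F).map g) : f = g :=
  RingQuot.ringQuot_ext' _ _ _ <| FreeAlgebra.hom_ext <| funext fun ij => congr_fun₂ h ij.1 ij.2

/-- The homomorphism `B(ᵀF,ᵀE) → B(E,F)` sending the generating matrix to `z* = F⁻¹ · ᵀz · E`. -/
def adjointHom (hE : IsUnit E) (hF : IsUnit F) : BB k Fᵀ Eᵀ →ₐ[k] BB k E F :=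
  lift (formAdjoint E F (ZMat k E F)) ((isFormIsometry_ZMat E F).adjoint hE hF)

-- The composite typechecks because `Eᵀᵀ` and `Fᵀᵀ` are definitionally `E` and `F`.
lemma adjointHom_comp_adjointHom (hE : IsUnit E) (hF : IsUnit F) :
    (adjointHom hE hF).comp (adjointHom ((isUnit_transpose F).2 hF) ((isUnit_transpose E).2 hE)) =
      AlgHom.id k (BB k E F) := by
  apply hom_ext
  calc (ZMat k E F).map ((adjointHom hE hF).comp (adjointHom _ _))
    _ = ((ZMat k E F).map (adjointHom ((isUnit_transpose F).2 hF) ((isUnit_transpose E).2 hE))).map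
          (adjointHom hE hF) := rfl
    _ = (formAdjoint Fᵀ Eᵀ (ZMat k Fᵀ Eᵀ)).map (adjointHom hE hF) :=
      congrArg (Matrix.map · _) (map_lift_ZMat _)
    _ = ZMat k E F := by
      rw [formAdjoint_map, adjointHom, map_lift_ZMat, formAdjoint_formAdjoint hE hF]

/-- The isomorphism `B(ᵀF,ᵀE) ≃ B(E,F)` sending the generating matrix to `z* = F⁻¹ · ᵀz · E`. -/
def adjointEquiv (hE : IsUnit E) (hF : IsUnit F) : BB k Fᵀ Eᵀ ≃ₐ[k] BB k E F :=
  AlgEquiv.ofAlgHom (adjointHom hE hF)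
    (adjointHom ((isUnit_transpose F).2 hF) ((isUnit_transpose E).2 hE))
    (adjointHom_comp_adjointHom hE hF)
    (adjointHom_comp_adjointHom ((isUnit_transpose F).2 hF) ((isUnit_transpose E).2 hE))

lemma adjointEquiv_ZMat (hE : IsUnit E) (hF : IsUnit F) (i : Fin n) (j : Fin m) :
    adjointEquiv hE hF (ZMat k Fᵀ Eᵀ i j) = formAdjoint E F (ZMat k E F) i j :=
  lift_ZMat _ i j

/-- The homomorphism `B(E,F) → B(ᵀE,ᵀF)ᵒᵖ` sending each generator to the one with the same
indices. -/
def opHom (hE : IsUnit E) (hF : IsUnit F) : BB k E F →ₐ[k] (BB k Eᵀ Fᵀ)ᵐᵒᵖ :=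
  lift ((ZMat k Eᵀ Fᵀ).map MulOpposite.op) <|
    (isFormIsometry_ZMat Eᵀ Fᵀ).map_op ((isUnit_transpose E).2 hE) ((isUnit_transpose F).2 hF)

lemma opHom_ZMat (hE : IsUnit E) (hF : IsUnit F) (i : Fin m) (j : Fin n) :
    opHom hE hF (ZMat k E F i j) = MulOpposite.op (ZMat k Eᵀ Fᵀ i j) :=
  lift_ZMat _ i j

lemma opComm_opHom_comp_opHom (hE : IsUnit E) (hF : IsUnit F) :
    (AlgHom.opComm (opHom ((isUnit_transpose E).2 hE) ((isUnit_transpose F).2 hF))).comp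
      (opHom hE hF) = AlgHom.id k (BB k E F) := by
  apply hom_ext
  ext i j
  change (opHom ((isUnit_transpose E).2 hE) ((isUnit_transpose F).2 hF)
    (opHom hE hF (ZMat k E F i j)).unop).unop = ZMat k E F i j
  rw [opHom_ZMat hE hF, MulOpposite.unop_op]
  exact congrArg MulOpposite.unop (opHom_ZMat _ _ i j)

/-- The isomorphism `B(E,F) ≃ B(ᵀE,ᵀF)ᵒᵖ` sending each generator to the one with the same
indices. -/
def opEquiv (hE : IsUnit E) (hF : IsUnit F) : BB k E F ≃ₐ[k] (BB k Eᵀ Fᵀ)ᵐᵒᵖ :=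
  AlgEquiv.ofAlgHom (opHom hE hF)
    (AlgHom.opComm (opHom ((isUnit_transpose E).2 hE) ((isUnit_transpose F).2 hF)))
    (AlgHom.ext fun x => MulOpposite.unop_injective <| DFunLike.congr_fun
      (opComm_opHom_comp_opHom ((isUnit_transpose E).2 hE) ((isUnit_transpose F).2 hF)) x.unop)
    (opComm_opHom_comp_opHom hE hF)

lemma opEquiv_ZMat (hE : IsUnit E) (hF : IsUnit F) (i : Fin m) (j : Fin n) :
    opEquiv hE hF (ZMat k E F i j) = MulOpposite.op (ZMat k Eᵀ Fᵀ i j) :=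
  opHom_ZMat hE hF i j

end BB

end

/-- **Statement 6.** There is an algebra isomorphism `φ : B(F,E) → B(E,F)ᵒᵖ`
determined on generators by `φ(y) = F⁻¹ · ᵀz · E` entrywise. -/
theorem BB_op_iso {m n : ℕ}
    (E : Matrix (Fin m) (Fin m) k) (F : Matrix (Fin n) (Fin n) k)
    (hE : IsUnit E.det) (hF : IsUnit F.det) :
    ∃ φ : BB k F E ≃ₐ[k] (BB k E F)ᵐᵒᵖ,
      ∀ i j, φ (ZMat k F E i j) = MulOpposite.op
        ((liftMat k (A := BB k E F) F⁻¹ * (ZMat k E F)ᵀ * liftMat k (A := BB k E F) E :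
          Matrix (Fin n) (Fin m) (BB k E F)) i j) := by
  rw [← Matrix.isUnit_iff_isUnit_det] at hE hF
  refine ⟨(BB.opEquiv hF hE).trans (AlgEquiv.op (BB.adjointEquiv hE hF)), fun i j => ?_⟩
  rw [AlgEquiv.trans_apply, BB.opEquiv_ZMat, AlgEquiv.op_apply_apply, MulOpposite.unop_op,
    BB.adjointEquiv_ZMat, formAdjoint]
end
end

section
/- Let q ∈ k* and let F ∈ GL(n,k) with n ≥ 2. Assume that q² + tr(F·ᵀF⁻¹)·q + 1 = 0. Then the algebra B(E_q, F) is a non-zero algebra, i.e. 1 ≠ 0 in B(E_q, F). -/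
open scoped TensorProduct
open Matrix

noncomputable section

variable (k : Type) [Field k]

/-- The matrix `E_q` with rows `(0, 1)` and `(−q⁻¹, 0)`, so that `B(E_q) = O(SL_q(2))`. -/
def Eqm (q : k) : Matrix (Fin 2) (Fin 2) k := !![0, 1; -q⁻¹, 0]

/-!
Let `a` and `b` be the rows of `z`, and put `G = F⁻¹`, `p = q⁻¹`. The relations of `B(E_q, F)` say
that `aᵢ bⱼ = p bᵢ aⱼ + Fᵢⱼ`, `aGa = 0`, `bGb = 0`, `bGa = 1` and `aGb = -q`, where
`uGv = ∑ Gᵢⱼ uᵢ vⱼ`. They are realized on a Fock space. On the free algebra in the `bᵢ`, the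
exchange relation determines operators `aᵢ` from `aᵢ · 1 = αᵢ`, for any vector `α`. If `ᵀαGα = 0`,
the trace condition makes the left ideal generated by the images of `bGb` and `bGa - 1` stable under
the `aᵢ`, so that all the relations hold on the quotient.

The quotient is non-zero because it maps non-trivially to a point module: `bᵢ` acts on sequences as
the shift with weights `(wₘ)ᵢ`, where `ᵀwₘ G wₘ₊₁ = 0` and `ᵀwₘ G α = 1`. Such weights exist as soon
as `α ≠ 0`, and a non-zero isotropic `α` exists over the algebraic closure because `n ≥ 2`.
-/

section Pairing

variable {R ι A : Type*} [CommRing R] [Fintype ι] [Ring A] [Algebra R A]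

/-- The sum `∑ uᵢ Gᵢⱼ vⱼ`, that is `ᵀu·G·v`, for two families `u`, `v` of elements of a possibly
noncommutative algebra. -/
def pairing (G : Matrix ι ι R) (u v : ι → A) : A :=
  ∑ i, ∑ j, G i j • (u i * v j)

lemma pairing_apply_of_intertwines {M M' : Type*} [AddCommGroup M] [Module R M] [AddCommGroup M']
    [Module R M'] (f : M →ₗ[R] M') (G : Matrix ι ι R) {u v : ι → Module.End R M}
    {u' v' : ι → Module.End R M'} (hu : ∀ i t, u' i (f t) = f (u i t))
    (hv : ∀ i t, v' i (f t) = f (v i t)) (t : M) :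
    pairing G u' v' (f t) = f (pairing G u v t) := by
  simp only [pairing, LinearMap.sum_apply, LinearMap.smul_apply, Module.End.mul_apply, hv, hu,
    map_sum, map_smul]

lemma pairing_map_algebraMap {S : Type*} [CommRing S] [Algebra R S] [Algebra S A]
    [IsScalarTower R S A] (G : Matrix ι ι R) (u v : ι → A) :
    pairing (G.map (algebraMap R S)) u v = pairing G u v := by
  simp only [pairing, Matrix.map_apply, algebraMap_smul]

end Pairing

/-- The exchange relation `aᵢ bⱼ = p bᵢ aⱼ + Fᵢⱼ`. For `p = q⁻¹` it is the relation
`ᵀz·E_q·z = F` on a matrix `z` with rows `a` and `b`. -/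
def ExchangeRel {R ι A : Type*} [CommRing R] [Ring A] [Algebra R A] (p : R) (F : Matrix ι ι R)
    (a b : ι → A) : Prop :=
  ∀ i j, a i * b j = p • (b i * a j) + F i j • 1

namespace ExchangeRel

variable {R ι A : Type*} [CommRing R] [Ring A] [Algebra R A] {p : R} {F G : Matrix ι ι R}
  {a b : ι → A}

lemma of_map_algebraMap {S : Type*} [CommRing S] [Algebra R S] [Algebra S A] [IsScalarTower R S A]
    (h : ExchangeRel (algebraMap R S p) (F.map (algebraMap R S)) a b) : ExchangeRel p F a b :=
  fun i j => by simpa only [Matrix.map_apply, algebraMap_smul] using h i j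

variable [Fintype ι]

lemma pairing_swap (h : ExchangeRel p F a b) :
    pairing G a b = p • pairing G b a + (F * Gᵀ).trace • 1 := by
  simp only [pairing, h _ _, smul_add, Finset.sum_add_distrib, smul_smul, Finset.smul_sum,
    Matrix.trace, Matrix.diag_apply, Matrix.mul_apply, Matrix.transpose_apply, Finset.sum_smul,
    mul_comm]

lemma smul_pairing_add_one (h : ExchangeRel p F a b) (htr : p ^ 2 + (F * Gᵀ).trace * p + 1 = 0) :
    p • pairing G a b + 1 = p ^ 2 • (pairing G b a - 1) := by
  have hscalar : p * (F * Gᵀ).trace + 1 = -p ^ 2 := by linear_combination htr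
  calc p • pairing G a b + 1
      = p ^ 2 • pairing G b a + (p * (F * Gᵀ).trace + 1) • 1 := by
        rw [h.pairing_swap, smul_add, smul_smul, smul_smul, add_smul, one_smul, sq, add_assoc]
    _ = p ^ 2 • (pairing G b a - 1) := by rw [hscalar, neg_smul, ← sub_eq_add_neg, smul_sub]

lemma pairing_eq_neg_smul_one {K : Type*} [Field K] [Algebra K A] {q : K}
    {F G : Matrix ι ι K} (h : ExchangeRel q⁻¹ F a b) (hq : q ≠ 0)
    (htr : q⁻¹ ^ 2 + (F * Gᵀ).trace * q⁻¹ + 1 = 0) (hba : pairing G b a = 1) :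
    pairing G a b = -q • 1 := by
  have h := h.smul_pairing_add_one htr
  rw [hba, sub_self, smul_zero, add_eq_zero_iff_eq_neg, inv_smul_eq_iff₀ hq] at h
  rw [h, smul_neg, neg_smul]

variable [DecidableEq ι]

lemma pairing_mul_right (h : ExchangeRel p F a b) (hGF : G * F = 1) (u : ι → A) (l : ι) :
    pairing G u a * b l = p • (pairing G u b * a l) + u l := by
  have contract_inverse : ∑ i, ∑ j, (G i j * F j l) • u i = u l := by
    simp only [← Finset.sum_smul, ← Matrix.mul_apply, hGF, Matrix.one_apply, ite_smul, one_smul,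
      zero_smul, Finset.sum_ite_eq', Finset.mem_univ, if_true]
  simp only [pairing, Finset.sum_mul, smul_mul_assoc, mul_assoc, h _ _, mul_add, mul_smul_comm,
    mul_one, smul_add, smul_smul, Finset.sum_add_distrib, contract_inverse, Finset.smul_sum,
    mul_comm p]

lemma mul_pairing_left (h : ExchangeRel p F a b) (hFG : F * G = 1) (v : ι → A) (l : ι) :
    a l * pairing G b v = p • (b l * pairing G a v) + v l := by
  have contract_inverse : ∑ j, ∑ i, (F l i * G i j) • v j = v l := by
    simp only [← Finset.sum_smul, ← Matrix.mul_apply, hFG, Matrix.one_apply, ite_smul, one_smul,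
      zero_smul, Finset.sum_ite_eq, Finset.mem_univ, if_true]
  rw [Finset.sum_comm] at contract_inverse
  simp only [pairing, Finset.mul_sum, mul_smul_comm, ← mul_assoc, h _ _, add_mul, smul_mul_assoc,
    one_mul, smul_add, smul_smul, Finset.sum_add_distrib, Finset.smul_sum, mul_comm (G _ _),
    contract_inverse]

lemma mul_pairing_self (h : ExchangeRel p F a b) (hFG : F * G = 1)
    (htr : p ^ 2 + (F * Gᵀ).trace * p + 1 = 0) (l : ι) :
    a l * pairing G b b = p ^ 2 • (b l * (pairing G b a - 1)) := by
  rw [h.mul_pairing_left hFG, ← mul_smul_comm, ← mul_add_one, h.smul_pairing_add_one htr,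
    mul_smul_comm]

lemma pairing_self_mul (h : ExchangeRel p F a b) (hGF : G * F = 1)
    (htr : p ^ 2 + (F * Gᵀ).trace * p + 1 = 0) (l : ι) :
    pairing G a a * b l = p ^ 2 • ((pairing G b a - 1) * a l) := by
  rw [h.pairing_mul_right hGF, ← smul_mul_assoc, ← add_one_mul, h.smul_pairing_add_one htr,
    smul_mul_assoc]

lemma pairing_sub_one_mul (h : ExchangeRel p F a b) (hGF : G * F = 1) (l : ι) :
    (pairing G b a - 1) * b l = p • (pairing G b b * a l) := by
  rw [sub_one_mul, h.pairing_mul_right hGF, add_sub_cancel_right]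

lemma mul_pairing_sub_one (h : ExchangeRel p F a b) (hFG : F * G = 1) (l : ι) :
    a l * (pairing G b a - 1) = p • (b l * pairing G a a) := by
  rw [mul_sub_one, h.mul_pairing_left hFG, add_sub_cancel_right]

end ExchangeRel

section FreeAlgebraInduction

variable {R ι : Type*} [CommRing R]

lemma mul_mem_of_forall_ι_mul_mem {S : Submodule R (FreeAlgebra R ι)}
    (hS : ∀ i, ∀ t ∈ S, FreeAlgebra.ι R i * t ∈ S) (c : FreeAlgebra R ι) {t : FreeAlgebra R ι}
    (ht : t ∈ S) : c * t ∈ S := by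
  induction c using FreeAlgebra.induction generalizing t with
  | grade0 r => rw [← Algebra.smul_def]; exact S.smul_mem r ht
  | grade1 i => exact hS i t ht
  | mul c d hc hd => rw [mul_assoc]; exact hc (hd ht)
  | add c d hc hd => rw [add_mul]; exact S.add_mem (hc ht) (hd ht)

lemma mem_of_one_mem_of_forall_ι_mul_mem {S : Submodule R (FreeAlgebra R ι)} (h1 : 1 ∈ S)
    (hS : ∀ i, ∀ t ∈ S, FreeAlgebra.ι R i * t ∈ S) (t : FreeAlgebra R ι) : t ∈ S :=
  mul_one t ▸ mul_mem_of_forall_ι_mul_mem hS t h1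

lemma basisFreeMonoid_eq_prod (w : FreeMonoid ι) :
    FreeAlgebra.basisFreeMonoid R ι w = (w.toList.map (FreeAlgebra.ι R)).prod := by
  simp [FreeAlgebra.basisFreeMonoid, FreeAlgebra.equivMonoidAlgebraFreeMonoid,
    FreeMonoid.lift_apply]

end FreeAlgebraInduction

section Fock

variable {R ι : Type*} [CommRing R]

/-- The left multiplications by the generators, the operators `bᵢ` on the free algebra. -/
def creation (i : ι) : Module.End R (FreeAlgebra R ι) :=
  LinearMap.mulLeft R (FreeAlgebra.ι R i)

lemma creation_apply (i : ι) (t : FreeAlgebra R ι) : creation i t = FreeAlgebra.ι R i * t := rfl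

/-- The values of the operators `aᵢ` on words in the generators, found by moving `aᵢ` to the right
with the exchange relation until it reaches `1`, on which it acts as the scalar `αᵢ`. -/
def annihilationWord (p : R) (F : Matrix ι ι R) (α : ι → R) : List ι → ι → FreeAlgebra R ι
  | [], i => algebraMap R _ (α i)
  | j :: w, i => p • (FreeAlgebra.ι R i * annihilationWord p F α w j) +
      F i j • (w.map (FreeAlgebra.ι R)).prod

/-- The operators `aᵢ` on the free algebra. -/
def annihilation (p : R) (F : Matrix ι ι R) (α : ι → R) (i : ι) :
    Module.End R (FreeAlgebra R ι) :=
  (FreeAlgebra.basisFreeMonoid R ι).constr R fun w => annihilationWord p F α w.toList i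

variable (p : R) (F : Matrix ι ι R) (α : ι → R)

lemma annihilation_prod_map_ι (i : ι) (w : List ι) :
    annihilation p F α i (w.map (FreeAlgebra.ι R)).prod = annihilationWord p F α w i := by
  rw [← FreeMonoid.toList_ofList w, ← basisFreeMonoid_eq_prod, annihilation,
    Module.Basis.constr_basis]

lemma annihilation_one (i : ι) : annihilation p F α i 1 = α i • 1 := by
  simpa only [List.map_nil, List.prod_nil, annihilationWord, Algebra.algebraMap_eq_smul_one] using
    annihilation_prod_map_ι p F α i []

lemma exchangeRel_annihilation_creation : ExchangeRel p F (annihilation p F α) creation := by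
  intro i j
  refine (FreeAlgebra.basisFreeMonoid R ι).ext fun w => ?_
  simpa only [basisFreeMonoid_eq_prod, LinearMap.add_apply, LinearMap.smul_apply,
    Module.End.mul_apply, Module.End.one_apply, creation_apply, annihilation_prod_map_ι,
    List.map_cons, List.prod_cons, annihilationWord] using
    annihilation_prod_map_ι p F α i (j :: w.toList)

variable [Fintype ι]

/-- The elements `bGb·s` and `(bGa - 1)·s` of the free algebra, which have to vanish for the
relations `bGb = 0` and `bGa = 1` to hold. -/
def fockRelators (G : Matrix ι ι R) : Set (FreeAlgebra R ι) :=
  {t | ∃ s, t = pairing G creation creation s ∨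
    t = (pairing G creation (annihilation p F α) - 1) s}

/-- The left ideal generated by the relators. The Fock space, on which the relations of
`B(E_q, F)` are realized, is the quotient of the free algebra by it. -/
def fockIdeal (G : Matrix ι ι R) : Ideal (FreeAlgebra R ι) :=
  Ideal.span (fockRelators p F α G)

variable {p F α} {G : Matrix ι ι R}

lemma pairing_creation_mem_fockIdeal (t : FreeAlgebra R ι) :
    pairing G creation creation t ∈ fockIdeal p F α G :=
  Ideal.subset_span ⟨t, .inl rfl⟩

lemma pairing_sub_one_mem_fockIdeal (t : FreeAlgebra R ι) :
    (pairing G creation (annihilation p F α) - 1) t ∈ fockIdeal p F α G :=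
  Ideal.subset_span ⟨t, .inr rfl⟩

lemma smul_mem_fockIdeal (r : R) {t : FreeAlgebra R ι} (ht : t ∈ fockIdeal p F α G) :
    r • t ∈ fockIdeal p F α G :=
  ((fockIdeal p F α G).restrictScalars R).smul_mem r ht

variable [DecidableEq ι]

lemma pairing_annihilation_mem_fockIdeal (hGF : G * F = 1)
    (htr : p ^ 2 + (F * Gᵀ).trace * p + 1 = 0) (hα : α ⬝ᵥ G *ᵥ α = 0) (t : FreeAlgebra R ι) :
    pairing G (annihilation p F α) (annihilation p F α) t ∈ fockIdeal p F α G := by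
  refine mem_of_one_mem_of_forall_ι_mul_mem (S := ((fockIdeal p F α G).restrictScalars R).comap
    (pairing G (annihilation p F α) (annihilation p F α))) ?_ (fun l t _ => ?_) t
  · have vacuum : pairing G (annihilation p F α) (annihilation p F α) 1 = (α ⬝ᵥ G *ᵥ α) • 1 := by
      simp only [pairing, LinearMap.sum_apply, LinearMap.smul_apply, Module.End.mul_apply,
        annihilation_one, map_smul, smul_smul, dotProduct, Matrix.mulVec, Finset.mul_sum,
        ← Finset.sum_smul]
      congr! 3
      ring
    simp only [Submodule.mem_comap, vacuum, hα, zero_smul, zero_mem]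
  · have h := (exchangeRel_annihilation_creation p F α).pairing_self_mul hGF htr l
    rw [Submodule.mem_comap, Submodule.restrictScalars_mem, ← creation_apply,
      ← Module.End.mul_apply, h]
    exact smul_mem_fockIdeal _ (pairing_sub_one_mem_fockIdeal _)

lemma annihilation_mem_fockIdeal_of_mem_fockRelators (hFG : F * G = 1)
    (htr : p ^ 2 + (F * Gᵀ).trace * p + 1 = 0) (hα : α ⬝ᵥ G *ᵥ α = 0) {t : FreeAlgebra R ι}
    (ht : t ∈ fockRelators p F α G) (l : ι) :
    annihilation p F α l t ∈ fockIdeal p F α G := by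
  have h := exchangeRel_annihilation_creation p F α
  obtain ⟨s, rfl | rfl⟩ := ht
  · rw [← Module.End.mul_apply, h.mul_pairing_self hFG htr]
    exact smul_mem_fockIdeal _ (Ideal.mul_mem_left _ _ (pairing_sub_one_mem_fockIdeal s))
  · rw [← Module.End.mul_apply, h.mul_pairing_sub_one hFG]
    exact smul_mem_fockIdeal _ (Ideal.mul_mem_left _ _
      (pairing_annihilation_mem_fockIdeal (mul_eq_one_comm.mp hFG) htr hα s))

lemma annihilation_mem_fockIdeal (hFG : F * G = 1)
    (htr : p ^ 2 + (F * Gᵀ).trace * p + 1 = 0) (hα : α ⬝ᵥ G *ᵥ α = 0) {t : FreeAlgebra R ι}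
    (ht : t ∈ fockIdeal p F α G) (l : ι) : annihilation p F α l t ∈ fockIdeal p F α G := by
  let I := (fockIdeal p F α G).restrictScalars R
  let S : Submodule R (FreeAlgebra R ι) := I ⊓ ⨅ l, I.comap (annihilation p F α l)
  have mem_S (s : FreeAlgebra R ι) : s ∈ S ↔ s ∈ fockIdeal p F α G ∧
      ∀ l, annihilation p F α l s ∈ fockIdeal p F α G := by
    simp only [S, I, Submodule.mem_inf, Submodule.mem_iInf, Submodule.mem_comap,
      Submodule.restrictScalars_mem]
  have ι_mul_mem_S (j : ι) (s : FreeAlgebra R ι) (hs : s ∈ S) : FreeAlgebra.ι R j * s ∈ S := by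
    rw [mem_S] at hs ⊢
    refine ⟨Ideal.mul_mem_left _ _ hs.1, fun l => ?_⟩
    rw [← creation_apply, ← Module.End.mul_apply, exchangeRel_annihilation_creation p F α l j]
    exact add_mem (smul_mem_fockIdeal _ (Ideal.mul_mem_left _ _ (hs.2 j)))
      (smul_mem_fockIdeal _ hs.1)
  suffices t ∈ S from ((mem_S t).mp this).2 l
  induction ht using Submodule.span_induction with
  | mem s hs => exact (mem_S s).mpr ⟨Ideal.subset_span hs,
      annihilation_mem_fockIdeal_of_mem_fockRelators hFG htr hα hs⟩
  | zero => exact S.zero_mem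
  | add s s' _ _ hs hs' => exact S.add_mem hs hs'
  | smul c s _ hs => exact mul_mem_of_forall_ι_mul_mem ι_mul_mem_S c hs

theorem exists_fock_operators (hFG : F * G = 1)
    (htr : p ^ 2 + (F * Gᵀ).trace * p + 1 = 0) (hα : α ⬝ᵥ G *ᵥ α = 0) :
    ∃ a b : ι → Module.End R (FreeAlgebra R ι ⧸ (fockIdeal p F α G).restrictScalars R),
      ExchangeRel p F a b ∧ pairing G a a = 0 ∧ pairing G b b = 0 ∧ pairing G b a = 1 := by
  let I := (fockIdeal p F α G).restrictScalars R
  let a (l : ι) : Module.End R (FreeAlgebra R ι ⧸ I) := I.mapQ I (annihilation p F α l)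
    fun t ht => annihilation_mem_fockIdeal hFG htr hα ht l
  let b (l : ι) : Module.End R (FreeAlgebra R ι ⧸ I) := I.mapQ I (creation l)
    fun t ht => Ideal.mul_mem_left (fockIdeal p F α G) _ ht
  have ha (l : ι) (t) : a l (I.mkQ t) = I.mkQ (annihilation p F α l t) := rfl
  have hb (l : ι) (t) : b l (I.mkQ t) = I.mkQ (creation l t) := rfl
  have ext_mkQ {f g : Module.End R (FreeAlgebra R ι ⧸ I)} (h : ∀ t, f (I.mkQ t) = g (I.mkQ t)) :
      f = g := Submodule.linearMap_qext _ (LinearMap.ext h)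
  refine ⟨a, b, fun i j => ext_mkQ fun t => ?_, ext_mkQ fun t => ?_, ext_mkQ fun t => ?_,
    ext_mkQ fun t => ?_⟩
  · exact congrArg I.mkQ (LinearMap.congr_fun (exchangeRel_annihilation_creation p F α i j) t)
  · rw [pairing_apply_of_intertwines I.mkQ G ha ha]
    exact (Submodule.Quotient.mk_eq_zero I).mpr
      (pairing_annihilation_mem_fockIdeal (mul_eq_one_comm.mp hFG) htr hα t)
  · rw [pairing_apply_of_intertwines I.mkQ G hb hb]
    exact (Submodule.Quotient.mk_eq_zero I).mpr (pairing_creation_mem_fockIdeal t)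
  · rw [pairing_apply_of_intertwines I.mkQ G hb ha]
    exact (Submodule.Quotient.eq I).mpr (pairing_sub_one_mem_fockIdeal t)

end Fock

section PointModule

variable {R ι : Type*} [CommRing R]

/-- The operator `(fₘ)ₘ ↦ (wₘ fₘ₊₁)ₘ` on sequences. -/
def weightedShift (w : ℕ → R) : Module.End R (ℕ → R) where
  toFun f m := w m * f (m + 1)
  map_add' f g := by ext m; simp only [Pi.add_apply, mul_add]
  map_smul' r f := by ext m; simp only [Pi.smul_apply, smul_eq_mul, RingHom.id_apply]; ring

lemma weightedShift_apply (w f : ℕ → R) (m : ℕ) : weightedShift w f m = w m * f (m + 1) := rfl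

/-- The action of the free algebra on the constant sequence `1`, the generators acting as the shifts
with weights `w · i`. -/
def pointEval (w : ℕ → ι → R) : FreeAlgebra R ι →ₗ[R] ℕ → R :=
  LinearMap.applyₗ 1 ∘ₗ (FreeAlgebra.lift R fun i => weightedShift (w · i)).toLinearMap

lemma pointEval_one (w : ℕ → ι → R) : pointEval w 1 = 1 := by
  simp [pointEval]

lemma pointEval_mul (w : ℕ → ι → R) (c t : FreeAlgebra R ι) :
    pointEval w (c * t) =
      FreeAlgebra.lift R (fun i => weightedShift (w · i)) c (pointEval w t) := by
  simp [pointEval]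

lemma weightedShift_pointEval (w : ℕ → ι → R) (i : ι) (t : FreeAlgebra R ι) :
    weightedShift (w · i) (pointEval w t) = pointEval w (creation i t) := by
  rw [creation_apply, pointEval_mul, FreeAlgebra.lift_ι_apply]

variable [Fintype ι] {G : Matrix ι ι R} {α x : ι → R}

lemma exists_weights (hα : α ⬝ᵥ G *ᵥ α = 0) (hx : x ⬝ᵥ G *ᵥ α = 1) :
    ∃ w : ℕ → ι → R, (∀ m, w m ⬝ᵥ G *ᵥ w (m + 1) = 0) ∧ ∀ m, w m ⬝ᵥ G *ᵥ α = 1 := by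
  let w (m : ℕ) : ι → R := Nat.rec x (fun _ v => x - (v ⬝ᵥ G *ᵥ x) • α) m
  have hw : ∀ m, w m ⬝ᵥ G *ᵥ α = 1
    | 0 => hx
    | m + 1 => by
      change (x - (w m ⬝ᵥ G *ᵥ x) • α) ⬝ᵥ G *ᵥ α = 1
      rw [sub_dotProduct, smul_dotProduct, hx, hα, smul_zero, sub_zero]
  refine ⟨w, fun m => ?_, hw⟩
  change w m ⬝ᵥ G *ᵥ (x - (w m ⬝ᵥ G *ᵥ x) • α) = 0
  rw [mulVec_sub, mulVec_smul, dotProduct_sub, dotProduct_smul, hw, smul_eq_mul, mul_one, sub_self]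

lemma pairing_weightedShift_eq_zero {w : ℕ → ι → R} (hw : ∀ m, w m ⬝ᵥ G *ᵥ w (m + 1) = 0) :
    pairing G (fun i => weightedShift (w · i)) (fun i => weightedShift (w · i)) = 0 := by
  ext1 f
  ext m
  have : pairing G (fun i => weightedShift (w · i)) (fun i => weightedShift (w · i)) f m =
      (w m ⬝ᵥ G *ᵥ w (m + 1)) * f (m + 2) := by
    simp only [pairing, LinearMap.sum_apply, LinearMap.smul_apply, Module.End.mul_apply,
      Finset.sum_apply, Pi.smul_apply, smul_eq_mul, weightedShift_apply, dotProduct, mulVec,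
      Finset.mul_sum, Finset.sum_mul]
    congr! 2
    ring
  rw [this, hw, zero_mul]
  rfl

lemma pointEval_pairing_creation {w : ℕ → ι → R} (hw : ∀ m, w m ⬝ᵥ G *ᵥ w (m + 1) = 0)
    (t : FreeAlgebra R ι) : pointEval w (pairing G creation creation t) = 0 := by
  rw [← pairing_apply_of_intertwines (pointEval w) G (weightedShift_pointEval w)
      (weightedShift_pointEval w),
    pairing_weightedShift_eq_zero hw, LinearMap.zero_apply]

lemma pointEval_pairing_creation_annihilation_one {p : R} {F : Matrix ι ι R} {w : ℕ → ι → R}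
    (hwα : ∀ m, w m ⬝ᵥ G *ᵥ α = 1) :
    pointEval w (pairing G creation (annihilation p F α) 1) = 1 := by
  ext m
  rw [Pi.one_apply, ← hwα m]
  simp only [pairing, LinearMap.sum_apply, LinearMap.smul_apply, Module.End.mul_apply,
    annihilation_one, map_smul, map_sum, ← weightedShift_pointEval, pointEval_one, Finset.sum_apply,
    Pi.smul_apply, weightedShift_apply, Pi.one_apply, smul_eq_mul, mul_one, dotProduct, mulVec,
    Finset.mul_sum]
  congr! 2
  ring

variable [DecidableEq ι] {p : R} {F : Matrix ι ι R}

lemma pointEval_pairing_sub_one {w : ℕ → ι → R} (hGF : G * F = 1)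
    (hw : ∀ m, w m ⬝ᵥ G *ᵥ w (m + 1) = 0) (hwα : ∀ m, w m ⬝ᵥ G *ᵥ α = 1) (t : FreeAlgebra R ι) :
    pointEval w ((pairing G creation (annihilation p F α) - 1) t) = 0 := by
  refine mem_of_one_mem_of_forall_ι_mul_mem
    (S := LinearMap.ker (pointEval w ∘ₗ (pairing G creation (annihilation p F α) - 1))) ?_
    (fun l t _ => ?_) t
  · rw [LinearMap.mem_ker, LinearMap.comp_apply, LinearMap.sub_apply, Module.End.one_apply, map_sub,
      pointEval_pairing_creation_annihilation_one hwα, pointEval_one, sub_self]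
  · have h := (exchangeRel_annihilation_creation p F α).pairing_sub_one_mul hGF l
    rw [LinearMap.mem_ker, LinearMap.comp_apply, ← creation_apply, ← Module.End.mul_apply, h,
      LinearMap.smul_apply, map_smul, Module.End.mul_apply, pointEval_pairing_creation hw,
      smul_zero]

lemma pointEval_eq_zero_of_mem_fockIdeal {w : ℕ → ι → R} (hGF : G * F = 1)
    (hw : ∀ m, w m ⬝ᵥ G *ᵥ w (m + 1) = 0) (hwα : ∀ m, w m ⬝ᵥ G *ᵥ α = 1) {t : FreeAlgebra R ι}
    (ht : t ∈ fockIdeal p F α G) : pointEval w t = 0 := by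
  induction ht using Submodule.span_induction with
  | mem t ht =>
    obtain ⟨s, rfl | rfl⟩ := ht
    exacts [pointEval_pairing_creation hw s, pointEval_pairing_sub_one hGF hw hwα s]
  | zero => exact map_zero _
  | add s t _ _ hs ht => rw [map_add, hs, ht, add_zero]
  | smul c t _ ht => rw [smul_eq_mul, pointEval_mul, ht, map_zero]

lemma one_notMem_fockIdeal [Nontrivial R] (hGF : G * F = 1) (hα : α ⬝ᵥ G *ᵥ α = 0)
    (hx : x ⬝ᵥ G *ᵥ α = 1) : (1 : FreeAlgebra R ι) ∉ fockIdeal p F α G := by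
  obtain ⟨w, hw, hwα⟩ := exists_weights hα hx
  exact fun h => one_ne_zero <|
    (pointEval_one w).symm.trans (pointEval_eq_zero_of_mem_fockIdeal hGF hw hwα h)

lemma nontrivial_quotient_fockIdeal [Nontrivial R] (hGF : G * F = 1) (hα : α ⬝ᵥ G *ᵥ α = 0)
    (hx : x ⬝ᵥ G *ᵥ α = 1) :
    Nontrivial (FreeAlgebra R ι ⧸ (fockIdeal p F α G).restrictScalars R) := by
  rw [Submodule.Quotient.nontrivial_iff, Ne, Submodule.restrictScalars_eq_top_iff]
  exact (Ideal.ne_top_iff_one _).mpr (one_notMem_fockIdeal hGF hα hx)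

end PointModule

section IsotropicVector

open Polynomial in
lemma exists_ne_zero_bilin_self_eq_zero {K V : Type*} [Field K] [IsAlgClosed K] [AddCommGroup V]
    [Module K V] (B : LinearMap.BilinForm K V) {u v : V} (huv : LinearIndependent K ![u, v]) :
    ∃ y ≠ 0, B y y = 0 := by
  by_cases hv : B v v = 0
  · exact ⟨v, huv.ne_zero 1, hv⟩
  obtain ⟨s, hs⟩ := IsAlgClosed.exists_root (C (B v v) * X ^ 2 + C (B u v + B v u) * X + C (B u u))
    (by rw [degree_quadratic hv]; decide)
  refine ⟨u + s • v, fun h => ?_, ?_⟩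
  · have := (LinearIndependent.pair_iff.mp huv 1 s (by rwa [one_smul])).1
    exact one_ne_zero this
  · simp only [IsRoot.def, eval_add, eval_mul, eval_C, eval_pow, eval_X] at hs
    simp only [map_add, map_smul, LinearMap.add_apply, LinearMap.smul_apply, smul_eq_mul]
    linear_combination hs

lemma exists_isotropic_and_dual {K ι : Type*} [Field K] [IsAlgClosed K] [Fintype ι] [DecidableEq ι]
    [Nontrivial ι] {G : Matrix ι ι K} (hG : IsUnit G) :
    ∃ α x : ι → K, α ⬝ᵥ G *ᵥ α = 0 ∧ x ⬝ᵥ G *ᵥ α = 1 := by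
  obtain ⟨i, j, hij⟩ := exists_pair_ne ι
  have indep : LinearIndependent K ![Pi.single (M := fun _ => K) i 1, Pi.single j 1] := by
    rw [LinearIndependent.pair_iff]
    intro s t h
    have hi := congrFun h i
    have hj := congrFun h j
    exact ⟨by simpa [hij] using hi, by simpa [hij.symm] using hj⟩
  obtain ⟨α, hα0, hα⟩ := exists_ne_zero_bilin_self_eq_zero (Matrix.toBilin' G) indep
  have hGα : G *ᵥ α ≠ 0 := fun h =>
    hα0 (Matrix.mulVec_injective_of_isUnit hG (h.trans (mulVec_zero G).symm))
  obtain ⟨l, hl⟩ := Function.ne_iff.mp hGα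
  refine ⟨α, Pi.single l ((G *ᵥ α) l)⁻¹, ?_, ?_⟩
  · rwa [Matrix.toBilin'_apply'] at hα
  · rw [single_dotProduct, inv_mul_cancel₀ hl]

end IsotropicVector

section Existence

universe u v

variable {K : Type u} {ι : Type v} [Field K] [Fintype ι] [DecidableEq ι] [Nontrivial ι] {p : K}
  {F G : Matrix ι ι K}

lemma exists_exchangeRel_of_isAlgClosed [IsAlgClosed K] (hFG : F * G = 1)
    (htr : p ^ 2 + (F * Gᵀ).trace * p + 1 = 0) :
    ∃ (A : Type max u v) (_ : Ring A) (_ : Algebra K A) (_ : Nontrivial A) (a b : ι → A),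
      ExchangeRel p F a b ∧ pairing G a a = 0 ∧ pairing G b b = 0 ∧ pairing G b a = 1 := by
  obtain ⟨α, x, hα, hx⟩ := exists_isotropic_and_dual (IsUnit.of_mul_eq_one_right _ hFG)
  have := nontrivial_quotient_fockIdeal (p := p) (mul_eq_one_comm.mp hFG) hα hx
  exact ⟨_, _, _, inferInstance, exists_fock_operators hFG htr hα⟩

theorem exists_exchangeRel (hFG : F * G = 1) (htr : p ^ 2 + (F * Gᵀ).trace * p + 1 = 0) :
    ∃ (A : Type max u v) (_ : Ring A) (_ : Algebra K A) (_ : Nontrivial A) (a b : ι → A),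
      ExchangeRel p F a b ∧ pairing G a a = 0 ∧ pairing G b b = 0 ∧ pairing G b a = 1 := by
  let φ := algebraMap K (AlgebraicClosure K)
  have hFG_map : F.map φ * G.map φ = 1 := by
    rw [← Matrix.map_mul, hFG, Matrix.map_one φ φ.map_zero φ.map_one]
  have htr_map : φ p ^ 2 + (F.map φ * (G.map φ)ᵀ).trace * φ p + 1 = 0 := by
    rw [← transpose_map, ← Matrix.map_mul, ← AddMonoidHom.map_trace]
    simpa only [map_add, map_mul, map_pow, map_one, map_zero] using congrArg φ htr
  obtain ⟨A, _, _, _, a, b, hab, h⟩ := exists_exchangeRel_of_isAlgClosed hFG_map htr_map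
  let : Algebra K A := Algebra.compHom A φ
  have : IsScalarTower K (AlgebraicClosure K) A := .of_algebraMap_eq fun _ => rfl
  simp only [φ, pairing_map_algebraMap] at h
  exact ⟨A, _, _, inferInstance, a, b, hab.of_map_algebraMap, h⟩

end Existence

section BB

variable {k} {A : Type} [Ring A] [Algebra k A]

lemma liftMat_mul {l m n : ℕ} (M : Matrix (Fin l) (Fin m) k) (N : Matrix (Fin m) (Fin n) k) :
    liftMat k (A := A) (M * N) = liftMat k (A := A) M * liftMat k (A := A) N :=
  Matrix.map_mul

lemma liftMat_one {n : ℕ} : liftMat k (A := A) (1 : Matrix (Fin n) (Fin n) k) = 1 :=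
  Matrix.map_one _ (map_zero _) (map_one _)

lemma BB_one_ne_zero_of_matrix [Nontrivial A] {m n : ℕ} {E : Matrix (Fin m) (Fin m) k}
    {F : Matrix (Fin n) (Fin n) k} {z : Matrix (Fin m) (Fin n) A}
    (hleft : liftMat k (A := A) F⁻¹ * zᵀ * liftMat k (A := A) E * z = 1)
    (hright : z * liftMat k (A := A) F⁻¹ * zᵀ * liftMat k (A := A) E = 1) :
    (1 : BB k E F) ≠ 0 := by
  let f : FreeAlgebra k (Fin m × Fin n) →ₐ[k] A := FreeAlgebra.lift k fun ij => z ij.1 ij.2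
  have map_gens : (gens k m n).map f = z := by
    ext i j
    exact FreeAlgebra.lift_ι_apply _ (i, j)
  have map_liftMat {r s : ℕ} (N : Matrix (Fin r) (Fin s) k) :
      (liftMat k N : Matrix _ _ (FreeAlgebra k (Fin m × Fin n))).map f = liftMat k N := by
    ext i j
    exact f.commutes (N i j)
  have map_one_matrix {r : ℕ} :
      (1 : Matrix (Fin r) (Fin r) (FreeAlgebra k (Fin m × Fin n))).map f = 1 :=
    Matrix.map_one f f.map_zero f.map_one
  have f_rel ⦃x y : FreeAlgebra k (Fin m × Fin n)⦄ (h : BRel k E F x y) : f x = f y := by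
    cases h <;> rw [← Matrix.map_apply (f := f), ← Matrix.map_apply (f := f)] <;>
      simp only [Matrix.map_mul, transpose_map, map_gens, map_liftMat, map_one_matrix, hleft,
        hright]
  have := (RingQuot.liftAlgHom k ⟨f, f_rel⟩ : BB k E F →ₐ[k] A).toRingHom.domain_nontrivial
  exact one_ne_zero

lemma mul_liftMat_mul_transpose_apply {m n : ℕ} (z : Matrix (Fin m) (Fin n) A)
    (G : Matrix (Fin n) (Fin n) k) (i j : Fin m) :
    (z * liftMat k (A := A) G * zᵀ) i j = pairing G (z i) (z j) := by
  simp only [Matrix.mul_apply, liftMat, Matrix.map_apply, Matrix.transpose_apply, pairing,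
    Finset.sum_mul]
  rw [Finset.sum_comm]
  simp only [← Algebra.commutes, ← Algebra.smul_def, smul_mul_assoc]

lemma ExchangeRel.transpose_mul_Eqm_mul {n : ℕ} {q : k} {F : Matrix (Fin n) (Fin n) k}
    {a b : Fin n → A} (h : ExchangeRel q⁻¹ F a b) :
    (Matrix.of ![a, b])ᵀ * liftMat k (A := A) (Eqm k q) * Matrix.of ![a, b] =
      liftMat k (A := A) F := by
  ext i j
  simp [Matrix.mul_apply, Fin.sum_univ_two, liftMat, Eqm, h i j, Algebra.smul_def,
    ← Algebra.commutes q⁻¹ (b i), mul_assoc]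

lemma inverse_mul_Eqm {q : k} (hq : q ≠ 0) : !![0, -q; 1, 0] * Eqm k q = 1 := by
  simp [Eqm, hq, Matrix.one_fin_two]

lemma BB_Eqm_one_ne_zero_of_exchangeRel [Nontrivial A] {n : ℕ} {q : k} (hq : q ≠ 0)
    {F : Matrix (Fin n) (Fin n) k} (hF : IsUnit F.det) {a b : Fin n → A}
    (h : ExchangeRel q⁻¹ F a b) (haa : pairing F⁻¹ a a = 0) (hab : pairing F⁻¹ a b = -q • 1)
    (hba : pairing F⁻¹ b a = 1) (hbb : pairing F⁻¹ b b = 0) :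
    (1 : BB k (Eqm k q) F) ≠ 0 := by
  refine BB_one_ne_zero_of_matrix (z := Matrix.of ![a, b]) ?_ ?_
  · rw [Matrix.mul_assoc, Matrix.mul_assoc, ← Matrix.mul_assoc _ᵀ, h.transpose_mul_Eqm_mul,
      ← liftMat_mul, Matrix.nonsing_inv_mul F hF, liftMat_one]
  · have gram : Matrix.of ![a, b] * liftMat k (A := A) F⁻¹ * (Matrix.of ![a, b])ᵀ =
        liftMat k (A := A) !![0, -q; 1, 0] := by
      ext i j
      rw [mul_liftMat_mul_transpose_apply]
      fin_cases i <;> fin_cases j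
      exacts [haa.trans (map_zero (algebraMap k A)).symm,
        hab.trans (Algebra.algebraMap_eq_smul_one (-q)).symm,
        hba.trans (map_one (algebraMap k A)).symm, hbb.trans (map_zero (algebraMap k A)).symm]
    rw [gram, ← liftMat_mul, inverse_mul_Eqm hq, liftMat_one]

end BB

/-- **Statement 11.** If `q ∈ k*` satisfies `q² + tr(F·ᵀF⁻¹)·q + 1 = 0` then
`B(E_q, F)` is a non-zero algebra. -/
theorem BB_Eq_nonzero {n : ℕ} (hn : 2 ≤ n) (q : k) (hq : q ≠ 0)
    (F : Matrix (Fin n) (Fin n) k) (hF : IsUnit F.det)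
    (htr : q ^ 2 + (F * F⁻¹ᵀ).trace * q + 1 = 0) :
    (1 : BB k (Eqm k q) F) ≠ 0 := by
  have : Nontrivial (Fin n) := Fin.nontrivial_iff_two_le.mpr hn
  have htr_inv : q⁻¹ ^ 2 + (F * F⁻¹ᵀ).trace * q⁻¹ + 1 = 0 := by
    field_simp
    linear_combination htr
  obtain ⟨A, _, _, _, a, b, h, haa, hbb, hba⟩ :=
    exists_exchangeRel (Matrix.mul_nonsing_inv F hF) htr_inv
  exact BB_Eqm_one_ne_zero_of_exchangeRel hq hF h haa
    (h.pairing_eq_neg_smul_one hq htr_inv hba) hba hbb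
end
end
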